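/- arXiv:1312.1587 — 3 statements merged into one kernel-verified Lean document; each statement's English description precedes it below -/
import Mathlib

section
/- Let M be an invertible symmetric n×n real matrix, V : ℝⁿ → ℝ differentiable with gradient V_q, μ : ℝⁿ → ℝ^{m×n}, and h > 0. Define the discrete Lagrangian L_d^B(x, y) = h · ( (1/2)·((y−x)/h)ᵀ M ((y−x)/h) − V(y) ). Then for q_{k−1}, q_k, q_{k+1} ∈ ℝⁿ and λ ∈ ℝᵐ, the GNI equations D₁L_d^B(q_k, q_{k+1}) + D₂L_d^B(q_{k−1}, q_k) = μ(q_k)ᵀ λ and μ(q_k) M⁻¹ ( D₁L_d^B(q_k, q_{k+1}) − D₂L_d^B(q_{k−1}, q_k) ) = 0 hold if and only if, with λ̃ = λ/h, the nonholonomic Euler B scheme holds: q_{k+1} − 2q_k + q_{k−1} = −h² M⁻¹ ( V_q(q_k) + μ(q_k)ᵀ λ̃ ) and μ(q_k) ( (q_{k+1} − q_{k−1})/(2h) − (h/2) M⁻¹ V_q(q_k) ) = 0. -/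
/-!
Since `M` is symmetric, the kinetic term of the discrete Lagrangian is the quadratic form
`(y - x)ᵀ M (y - x) / (2h)`, so `D₁ = -h⁻¹ M (q₂ - q₁)` and `D₂ = h⁻¹ M (q₁ - q₀) - h V_q(q₁)`.
Hence `D₁ + D₂` is `-h⁻¹ M` applied to the second difference `q₂ - 2 q₁ + q₀`, minus the force term
`h V_q(q₁)`, while `M⁻¹ (D₁ - D₂)` is `-2` times the velocity on which the Euler B scheme imposes
the constraint. So each GNI equation is equivalent to one equation of the scheme.
-/

open Matrix

/-- The continuous linear functional on `ℝⁿ` given by dot product with `w`;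
used to express gradients of scalar functions. -/
noncomputable def vecCLM {n : ℕ} (w : Fin n → ℝ) : (Fin n → ℝ) →L[ℝ] ℝ :=
  ∑ i, w i • ContinuousLinearMap.proj (R := ℝ) (φ := fun _ : Fin n => ℝ) i

section LinearAlgebra

variable {ι κ : Type*} [Fintype ι] [DecidableEq ι]

theorem mulVec_eq_iff_eq_inv_mulVec {R : Type*} [CommRing R] {M : Matrix ι ι R} (hM : IsUnit M)
    {v w : ι → R} : M *ᵥ v = w ↔ v = M⁻¹ *ᵥ w := by
  have hdet : IsUnit M.det := M.isUnit_iff_isUnit_det.mp hM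
  constructor
  · rintro rfl
    rw [mulVec_mulVec, nonsing_inv_mul M hdet, one_mulVec]
  · rintro rfl
    rw [mulVec_mulVec, mul_nonsing_inv M hdet, one_mulVec]

variable {K : Type*} [Field K] {M : Matrix ι ι K} {h : K}

theorem eulerB_momentum_balance_iff (hM : IsUnit M) (hh : h ≠ 0) (q₀ q₁ q₂ g p : ι → K) :
    -(h⁻¹ • M *ᵥ (q₂ - q₁)) + (h⁻¹ • M *ᵥ (q₁ - q₀) - h • g) = p ↔
      q₂ - (2 : K) • q₁ + q₀ = -(h ^ 2) • M⁻¹ *ᵥ (g + h⁻¹ • p) := by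
  have hsum : -(h⁻¹ • M *ᵥ (q₂ - q₁)) + (h⁻¹ • M *ᵥ (q₁ - q₀) - h • g) =
      -(h⁻¹ • M *ᵥ (q₂ - (2 : K) • q₁ + q₀)) - h • g := by
    simp only [mulVec_add, mulVec_sub, mulVec_smul]
    module
  rw [hsum, ← mulVec_smul M⁻¹, ← mulVec_eq_iff_eq_inv_mulVec hM]
  generalize M *ᵥ (q₂ - (2 : K) • q₁ + q₀) = a
  constructor
  · rintro rfl
    match_scalars <;> grind
  · rintro rfl
    match_scalars <;> grind

theorem eulerB_constraint_iff [NeZero (2 : K)] (hM : IsUnit M) (hh : h ≠ 0)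
    (A : Matrix κ ι K) (q₀ q₁ q₂ g : ι → K) :
    A *ᵥ (M⁻¹ *ᵥ (-(h⁻¹ • M *ᵥ (q₂ - q₁)) - (h⁻¹ • M *ᵥ (q₁ - q₀) - h • g))) = 0 ↔
      A *ᵥ ((1 / (2 * h)) • (q₂ - q₀) - (h / 2) • M⁻¹ *ᵥ g) = 0 := by
  have hcancel (v : ι → K) : M⁻¹ *ᵥ (M *ᵥ v) = v :=
    ((mulVec_eq_iff_eq_inv_mulVec hM).mp rfl).symm
  have hvelocity : M⁻¹ *ᵥ (-(h⁻¹ • M *ᵥ (q₂ - q₁)) - (h⁻¹ • M *ᵥ (q₁ - q₀) - h • g)) =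
      (-2 : K) • ((1 / (2 * h)) • (q₂ - q₀) - (h / 2) • M⁻¹ *ᵥ g) := by
    have h2 : (2 : K) ≠ 0 := two_ne_zero
    simp only [mulVec_sub, mulVec_neg, mulVec_smul, hcancel]
    match_scalars <;> grind
  rw [hvelocity, mulVec_smul, smul_eq_zero_iff_right (neg_ne_zero.mpr two_ne_zero)]

end LinearAlgebra

section Gradients

variable {n : ℕ}

theorem vecCLM_apply (w v : Fin n → ℝ) : vecCLM w v = w ⬝ᵥ v := by
  simp [vecCLM, dotProduct]

theorem vecCLM_injective : Function.Injective (vecCLM (n := n)) := fun v w hvw =>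
  dotProduct_eq v w fun u => by rw [← vecCLM_apply, hvw, vecCLM_apply]

theorem hasFDerivAt_dotProduct_mulVec_self (M : Matrix (Fin n) (Fin n) ℝ) (x : Fin n → ℝ) :
    HasFDerivAt (fun x => x ⬝ᵥ M *ᵥ x) (vecCLM ((M + Mᵀ) *ᵥ x)) x := by
  have hbilin := (toLinearMap₂' ℝ M).toContinuousBilinearMap.hasFDerivAt_of_bilinear
    (hasFDerivAt_id x) (hasFDerivAt_id x)
  simp only [LinearMap.toContinuousBilinearMap_apply, toLinearMap₂'_apply', id] at hbilin
  refine hbilin.congr_fderiv (ContinuousLinearMap.ext fun v => ?_)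
  simp [vecCLM_apply, toLinearMap₂'_apply', add_mulVec, mulVec_transpose, ← dotProduct_mulVec,
    dotProduct_comm v, add_comm]

/-- The discrete Lagrangian `L_d^B` of the Euler B method with mass matrix `M`, potential `V` and
time step `h`: the velocity is replaced by the difference quotient and the potential is evaluated
at the right endpoint. -/
noncomputable def eulerBLagrangian (M : Matrix (Fin n) (Fin n) ℝ) (V : (Fin n → ℝ) → ℝ) (h : ℝ)
    (x y : Fin n → ℝ) : ℝ :=
  h * ((1 / 2) * (((1 / h) • (y - x)) ⬝ᵥ M *ᵥ ((1 / h) • (y - x))) - V y)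

theorem eulerBLagrangian_eq (M : Matrix (Fin n) (Fin n) ℝ) (V : (Fin n → ℝ) → ℝ) (h : ℝ)
    (x y : Fin n → ℝ) :
    eulerBLagrangian M V h x y = h⁻¹ / 2 * ((y - x) ⬝ᵥ M *ᵥ (y - x)) - h * V y := by
  simp only [eulerBLagrangian, mulVec_smul, smul_dotProduct, dotProduct_smul, smul_eq_mul]
  obtain rfl | hh := eq_or_ne h 0
  · simp
  · field_simp

variable {M : Matrix (Fin n) (Fin n) ℝ} {V : (Fin n → ℝ) → ℝ}

theorem hasFDerivAt_eulerBLagrangian_left (hM : M.IsSymm) (h : ℝ) (x y : Fin n → ℝ) :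
    HasFDerivAt (fun x => eulerBLagrangian M V h x y) (vecCLM (-(h⁻¹ • M *ᵥ (y - x)))) x := by
  simp only [eulerBLagrangian_eq]
  have hkinetic := ((hasFDerivAt_dotProduct_mulVec_self M (y - x)).comp x
    ((hasFDerivAt_id x).const_sub y)).const_mul (h⁻¹ / 2)
  refine (hkinetic.sub_const (h * V y)).congr_fderiv (ContinuousLinearMap.ext fun v => ?_)
  simp only [hM.eq, add_mulVec, ContinuousLinearMap.comp_neg, ContinuousLinearMap.comp_id,
    smul_neg, _root_.neg_apply, _root_.smul_apply, vecCLM_apply, add_dotProduct, neg_dotProduct,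
    smul_dotProduct, smul_eq_mul]
  ring

theorem hasFDerivAt_eulerBLagrangian_right (hM : M.IsSymm) (h : ℝ) (x : Fin n → ℝ)
    {y g : Fin n → ℝ} (hV : HasFDerivAt V (vecCLM g) y) :
    HasFDerivAt (eulerBLagrangian M V h x) (vecCLM (h⁻¹ • M *ᵥ (y - x) - h • g)) y := by
  rw [funext (eulerBLagrangian_eq M V h x)]
  have hkinetic := ((hasFDerivAt_dotProduct_mulVec_self M (y - x)).comp y
    ((hasFDerivAt_id y).sub_const x)).const_mul (h⁻¹ / 2)
  refine (hkinetic.sub (hV.const_mul h)).congr_fderiv (ContinuousLinearMap.ext fun v => ?_)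
  simp only [hM.eq, add_mulVec, ContinuousLinearMap.comp_id, _root_.sub_apply,
    _root_.smul_apply, vecCLM_apply, add_dotProduct, sub_dotProduct, smul_dotProduct, smul_eq_mul]
  ring

end Gradients

theorem gni_eulerB_scheme_general {n : ℕ} {κ : Type*} [Fintype κ]
    {M : Matrix (Fin n) (Fin n) ℝ} (hM : IsUnit M) (hMsymm : M.IsSymm)
    {V : (Fin n → ℝ) → ℝ} {q₀ q₁ q₂ g : Fin n → ℝ} (hV : HasFDerivAt V (vecCLM g) q₁)
    (A : Matrix κ (Fin n) ℝ) {h : ℝ} (hh : h ≠ 0) (lam : κ → ℝ) {D₁ D₂ : Fin n → ℝ}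
    (hD₁ : HasFDerivAt (fun x => eulerBLagrangian M V h x q₂) (vecCLM D₁) q₁)
    (hD₂ : HasFDerivAt (eulerBLagrangian M V h q₀) (vecCLM D₂) q₁) :
    (D₁ + D₂ = Aᵀ *ᵥ lam ∧ A *ᵥ (M⁻¹ *ᵥ (D₁ - D₂)) = 0) ↔
      (q₂ - (2 : ℝ) • q₁ + q₀ = -(h ^ 2) • (M⁻¹ *ᵥ (g + Aᵀ *ᵥ (h⁻¹ • lam))) ∧
        A *ᵥ ((1 / (2 * h)) • (q₂ - q₀) - (h / 2) • (M⁻¹ *ᵥ g)) = 0) := by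
  obtain rfl : D₁ = -(h⁻¹ • M *ᵥ (q₂ - q₁)) :=
    vecCLM_injective (hD₁.unique (hasFDerivAt_eulerBLagrangian_left hMsymm h q₁ q₂))
  obtain rfl : D₂ = h⁻¹ • M *ᵥ (q₁ - q₀) - h • g :=
    vecCLM_injective (hD₂.unique (hasFDerivAt_eulerBLagrangian_right hMsymm h q₀ hV))
  rw [mulVec_smul Aᵀ]
  exact and_congr (eulerB_momentum_balance_iff hM hh q₀ q₁ q₂ g (Aᵀ *ᵥ lam))
    (eulerB_constraint_iff hM hh A q₀ q₁ q₂ g)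

/-- For the discrete Lagrangian
`L_d^B(x,y) = h((1/2)((y−x)/h)ᵀ M ((y−x)/h) − V(y))`, the GNI equations
`D₁L_d^B(q_k,q_{k+1}) + D₂L_d^B(q_{k−1},q_k) = μ(q_k)ᵀλ` and
`μ(q_k) M⁻¹ (D₁L_d^B(q_k,q_{k+1}) − D₂L_d^B(q_{k−1},q_k)) = 0`
hold iff, with `λ̃ = λ/h`, the nonholonomic Euler B scheme holds:
`q_{k+1} − 2q_k + q_{k−1} = −h² M⁻¹(V_q(q_k) + μ(q_k)ᵀλ̃)` and
`μ(q_k)((q_{k+1} − q_{k−1})/(2h) − (h/2) M⁻¹ V_q(q_k)) = 0`. -/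
theorem gni_eulerB_scheme {n m : ℕ}
    (M : Matrix (Fin n) (Fin n) ℝ) (hM : IsUnit M) (hMsymm : Mᵀ = M)
    (V : (Fin n → ℝ) → ℝ) (Vq : (Fin n → ℝ) → Fin n → ℝ)
    (hV : ∀ x, HasFDerivAt V (vecCLM (Vq x)) x)
    (μ : (Fin n → ℝ) → Matrix (Fin m) (Fin n) ℝ)
    (h : ℝ) (hh : 0 < h)
    (Ld : (Fin n → ℝ) → (Fin n → ℝ) → ℝ)
    (hLd : ∀ x y, Ld x y =
      h * ((1 / 2) * (((1 / h) • (y - x)) ⬝ᵥ M *ᵥ ((1 / h) • (y - x))) - V y))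
    (q0 q1 q2 : Fin n → ℝ) (lam : Fin m → ℝ)
    (D1 D2 : Fin n → ℝ)
    (hD1 : HasFDerivAt (fun x => Ld x q2) (vecCLM D1) q1)
    (hD2 : HasFDerivAt (fun y => Ld q0 y) (vecCLM D2) q1) :
    (D1 + D2 = (μ q1)ᵀ *ᵥ lam ∧ μ q1 *ᵥ (M⁻¹ *ᵥ (D1 - D2)) = 0) ↔
      (q2 - (2 : ℝ) • q1 + q0 =
          -(h ^ 2) • (M⁻¹ *ᵥ (Vq q1 + (μ q1)ᵀ *ᵥ (h⁻¹ • lam))) ∧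
        μ q1 *ᵥ ((1 / (2 * h)) • (q2 - q0) - (h / 2) • (M⁻¹ *ᵥ Vq q1)) = 0) := by
  obtain rfl : Ld = eulerBLagrangian M V h := funext₂ hLd
  exact gni_eulerB_scheme_general hM hMsymm (hV q1) (μ q1) hh.ne' lam hD1 hD2
end

section
/- Let M be an invertible symmetric n×n real matrix, V : ℝⁿ → ℝ differentiable with gradient V_q, μ : ℝⁿ → ℝ^{m×n}, Y : ℝⁿ → ℝⁿ, Π(q) = M·Y(q), and h > 0. Let (q_k)_{k∈ℤ} be a sequence in ℝⁿ and (λ̃_k)_{k∈ℤ} a sequence in ℝᵐ, and define p̃_k = M (q_{k+1} − q_{k−1})/(2h) and p_{k+1/2} = M (q_{k+1} − q_k)/h. Then the affine SHAKE equations q_{k+1} − 2q_k + q_{k−1} = −h² M⁻¹ ( V_q(q_k) + μ(q_k)ᵀ λ̃_k ) and μ(q_k)( (q_{k+1} − q_{k−1})/(2h) − Y(q_k) ) = 0 hold for all k if and only if the affine RATTLE equations hold for all k: p_{k+1/2} = p̃_k − (h/2)( V_q(q_k) + μ(q_k)ᵀ λ̃_k ); q_{k+1} = q_k + h M⁻¹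 p_{k+1/2}; μ(q_k) M⁻¹ ( p̃_k − Π(q_k) ) = 0; p̃_{k+1} = p_{k+1/2} − (h/2)( V_q(q_{k+1}) + μ(q_{k+1})ᵀ λ̃_{k+1} ); and μ(q_{k+1}) M⁻¹ ( p̃_{k+1} − Π(q_{k+1}) ) = 0. -/
/-!
Both `p_{k+1/2} − p̃_k` and `p̃_k − p_{k−1/2}` equal `M (q_{k+1} − 2 q_k + q_{k−1}) / (2h)`. Hence
each of the two RATTLE momentum updates is the SHAKE equation multiplied by `M / (2h)`, at the index
`k` for the first update and `k + 1` for the second. The position update is the definition of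
`p_{k+1/2}`, and `M⁻¹ (p̃_k − M Y) = (q_{k+1} − q_{k−1}) / (2h) − Y` identifies the constraints.
-/

open Matrix

section Definitions

variable {K ι κ : Type*} [Field K] [Fintype ι]

/-- The second central difference `q_{k+1} − 2 q_k + q_{k−1}` of a sequence of positions, not
divided by the square of the step size. -/
def secondDiff (q : ℤ → ι → K) (k : ℤ) : ι → K :=
  q (k + 1) - (2 : K) • q k + q (k - 1)

/-- The momentum `p̃_k = M (q_{k+1} − q_{k−1}) / (2h)` at the node `k`, from the central
difference. -/
def nodeMomentum (M : Matrix ι ι K) (h : K) (q : ℤ → ι → K) (k : ℤ) : ι → K :=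
  (1 / (2 * h)) • (M *ᵥ (q (k + 1) - q (k - 1)))

/-- The momentum `p_{k+1/2} = M (q_{k+1} − q_k) / h` at the midpoint of a step, indexed by the left
endpoint `k`. -/
def midpointMomentum (M : Matrix ι ι K) (h : K) (q : ℤ → ι → K) (k : ℤ) : ι → K :=
  (1 / h) • (M *ᵥ (q (k + 1) - q k))

variable [DecidableEq ι] [Fintype κ]

/-- The affine SHAKE equations for positions `q` and multipliers `lam`, where `f` is the force
covector field with the sign convention of a gradient: `f = V_q` for a potential `V`. -/
def IsAffineShake (M : Matrix ι ι K) (f : (ι → K) → ι → K) (μ : (ι → K) → Matrix κ ι K)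
    (Y : (ι → K) → ι → K) (h : K) (q : ℤ → ι → K) (lam : ℤ → κ → K) : Prop :=
  ∀ k : ℤ,
    secondDiff q k = -(h ^ 2) • (M⁻¹ *ᵥ (f (q k) + (μ (q k))ᵀ *ᵥ lam k)) ∧
      μ (q k) *ᵥ ((1 / (2 * h)) • (q (k + 1) - q (k - 1)) - Y (q k)) = 0

/-- The affine RATTLE equations for positions `q`, node momenta `pt`, midpoint momenta `ph` and
multipliers `lam`, with `f` as in `IsAffineShake`. -/
def IsAffineRattle (M : Matrix ι ι K) (f : (ι → K) → ι → K) (μ : (ι → K) → Matrix κ ι K)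
    (Y : (ι → K) → ι → K) (h : K) (q pt ph : ℤ → ι → K) (lam : ℤ → κ → K) : Prop :=
  ∀ k : ℤ,
    ph k = pt k - (h / 2) • (f (q k) + (μ (q k))ᵀ *ᵥ lam k) ∧
      q (k + 1) = q k + h • (M⁻¹ *ᵥ ph k) ∧
      μ (q k) *ᵥ (M⁻¹ *ᵥ (pt k - M *ᵥ Y (q k))) = 0 ∧
      pt (k + 1) =
        ph k - (h / 2) • (f (q (k + 1)) + (μ (q (k + 1)))ᵀ *ᵥ lam (k + 1)) ∧
      μ (q (k + 1)) *ᵥ (M⁻¹ *ᵥ (pt (k + 1) - M *ᵥ Y (q (k + 1)))) = 0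

end Definitions

section InverseMulVec

variable {R ι : Type*} [CommRing R] [Fintype ι] [DecidableEq ι] {M : Matrix ι ι R}

lemma inv_mulVec_mulVec_of_isUnit (hM : IsUnit M) (v : ι → R) : M⁻¹ *ᵥ (M *ᵥ v) = v := by
  rw [mulVec_mulVec, nonsing_inv_mul M ((isUnit_iff_isUnit_det M).1 hM), one_mulVec]

lemma mulVec_inv_mulVec_of_isUnit (hM : IsUnit M) (v : ι → R) : M *ᵥ (M⁻¹ *ᵥ v) = v := by
  rw [mulVec_mulVec, mul_nonsing_inv M ((isUnit_iff_isUnit_det M).1 hM), one_mulVec]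

end InverseMulVec

section Momenta

variable {K ι : Type*} [Field K] [Fintype ι]

section Differences

variable [NeZero (2 : K)]

lemma one_div_eq_two_mul_one_div_two_mul (h : K) : 1 / h = 2 * (1 / (2 * h)) := by
  rw [one_div, one_div, mul_inv, mul_inv_cancel_left₀ two_ne_zero]

variable (M : Matrix ι ι K) (h : K) (q : ℤ → ι → K) (k : ℤ)

lemma midpointMomentum_eq_nodeMomentum_add :
    midpointMomentum M h q k = nodeMomentum M h q k + (1 / (2 * h)) • (M *ᵥ secondDiff q k) := by
  simp only [midpointMomentum, nodeMomentum, secondDiff, one_div_eq_two_mul_one_div_two_mul h,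
    mulVec_add, mulVec_sub, mulVec_smul]
  module

lemma nodeMomentum_succ_eq_midpointMomentum_add :
    nodeMomentum M h q (k + 1) =
      midpointMomentum M h q k + (1 / (2 * h)) • (M *ᵥ secondDiff q (k + 1)) := by
  simp only [midpointMomentum, nodeMomentum, secondDiff, one_div_eq_two_mul_one_div_two_mul h,
    mulVec_add, mulVec_sub, mulVec_smul, add_sub_cancel_right]
  module

end Differences

variable [DecidableEq ι] {M : Matrix ι ι K} {h : K}

lemma add_smul_inv_mulVec_midpointMomentum (hM : IsUnit M) (hh : h ≠ 0) (q : ℤ → ι → K) (k : ℤ) :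
    q k + h • (M⁻¹ *ᵥ midpointMomentum M h q k) = q (k + 1) := by
  rw [midpointMomentum, mulVec_smul, inv_mulVec_mulVec_of_isUnit hM, smul_smul,
    mul_one_div_cancel hh, one_smul, add_sub_cancel]

lemma inv_mulVec_nodeMomentum_sub (hM : IsUnit M) (h : K) (q : ℤ → ι → K) (k : ℤ) (y : ι → K) :
    M⁻¹ *ᵥ (nodeMomentum M h q k - M *ᵥ y) =
      (1 / (2 * h)) • (q (k + 1) - q (k - 1)) - y := by
  rw [nodeMomentum, ← mulVec_smul, ← mulVec_sub, inv_mulVec_mulVec_of_isUnit hM]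

variable [NeZero (2 : K)]

lemma add_smul_mulVec_eq_sub_iff (hM : IsUnit M) (hh : h ≠ 0) (p d F : ι → K) :
    p + (1 / (2 * h)) • (M *ᵥ d) = p - (h / 2) • F ↔ d = -(h ^ 2) • (M⁻¹ *ᵥ F) := by
  have scale : 1 / (2 * h) ≠ 0 := one_div_ne_zero (mul_ne_zero two_ne_zero hh)
  have coeff : 1 / (2 * h) * -(h ^ 2) = -(h / 2) := by field_simp
  have force : -((h / 2) • F) = (1 / (2 * h)) • (M *ᵥ (-(h ^ 2) • (M⁻¹ *ᵥ F))) := by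
    rw [mulVec_smul, mulVec_inv_mulVec_of_isUnit hM, smul_smul, coeff, neg_smul]
  rw [sub_eq_add_neg, add_right_inj, force, (smul_right_injective _ scale).eq_iff,
    (mulVec_injective_of_isUnit hM).eq_iff]

lemma midpointMomentum_eq_nodeMomentum_sub_iff (hM : IsUnit M) (hh : h ≠ 0) (q : ℤ → ι → K)
    (k : ℤ) (F : ι → K) :
    midpointMomentum M h q k = nodeMomentum M h q k - (h / 2) • F ↔
      secondDiff q k = -(h ^ 2) • (M⁻¹ *ᵥ F) := by
  rw [midpointMomentum_eq_nodeMomentum_add, add_smul_mulVec_eq_sub_iff hM hh]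

lemma nodeMomentum_succ_eq_midpointMomentum_sub_iff (hM : IsUnit M) (hh : h ≠ 0)
    (q : ℤ → ι → K) (k : ℤ) (F : ι → K) :
    nodeMomentum M h q (k + 1) = midpointMomentum M h q k - (h / 2) • F ↔
      secondDiff q (k + 1) = -(h ^ 2) • (M⁻¹ *ᵥ F) := by
  rw [nodeMomentum_succ_eq_midpointMomentum_add, add_smul_mulVec_eq_sub_iff hM hh]

end Momenta

theorem affine_shake_iff_rattle_general {K ι κ : Type*} [Field K] [NeZero (2 : K)] [Fintype ι]
    [DecidableEq ι] [Fintype κ] {M : Matrix ι ι K} (hM : IsUnit M) (f : (ι → K) → ι → K)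
    (μ : (ι → K) → Matrix κ ι K) (Y : (ι → K) → ι → K) {h : K} (hh : h ≠ 0)
    (q : ℤ → ι → K) (lam : ℤ → κ → K) :
    IsAffineShake M f μ Y h q lam ↔
      IsAffineRattle M f μ Y h q (nodeMomentum M h q) (midpointMomentum M h q) lam := by
  simp only [IsAffineRattle, midpointMomentum_eq_nodeMomentum_sub_iff hM hh,
    nodeMomentum_succ_eq_midpointMomentum_sub_iff hM hh,
    add_smul_inv_mulVec_midpointMomentum hM hh, inv_mulVec_nodeMomentum_sub hM, true_and]
  constructor
  · intro shake k
    exact ⟨(shake k).1, (shake k).2, shake (k + 1)⟩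
  · intro rattle k
    obtain ⟨dynamics, constraint, -⟩ := rattle k
    exact ⟨dynamics, constraint⟩

/-- With `p̃_k = M(q_{k+1} − q_{k−1})/(2h)` and
`p_{k+1/2} = M(q_{k+1} − q_k)/h`, and `Π(q) = M·Y(q)`, the affine SHAKE
equations hold for all `k` iff the affine RATTLE equations hold for all `k`. -/
theorem affine_shake_iff_rattle {n m : ℕ}
    (M : Matrix (Fin n) (Fin n) ℝ) (hM : IsUnit M) (hMsymm : Mᵀ = M)
    (V : (Fin n → ℝ) → ℝ) (Vq : (Fin n → ℝ) → Fin n → ℝ)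
    (hV : ∀ x, HasFDerivAt V (vecCLM (Vq x)) x)
    (μ : (Fin n → ℝ) → Matrix (Fin m) (Fin n) ℝ)
    (Y : (Fin n → ℝ) → Fin n → ℝ)
    (h : ℝ) (hh : 0 < h)
    (q : ℤ → Fin n → ℝ) (lam : ℤ → Fin m → ℝ)
    (pt ph : ℤ → Fin n → ℝ)
    (hpt : ∀ k, pt k = (1 / (2 * h)) • (M *ᵥ (q (k + 1) - q (k - 1))))
    (hph : ∀ k, ph k = (1 / h) • (M *ᵥ (q (k + 1) - q k))) :
    -- affine SHAKE
    (∀ k : ℤ,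
        q (k + 1) - (2 : ℝ) • q k + q (k - 1) =
            -(h ^ 2) • (M⁻¹ *ᵥ (Vq (q k) + (μ (q k))ᵀ *ᵥ lam k)) ∧
          μ (q k) *ᵥ ((1 / (2 * h)) • (q (k + 1) - q (k - 1)) - Y (q k)) = 0) ↔
      -- affine RATTLE
      (∀ k : ℤ,
        ph k = pt k - (h / 2) • (Vq (q k) + (μ (q k))ᵀ *ᵥ lam k) ∧
          q (k + 1) = q k + h • (M⁻¹ *ᵥ ph k) ∧
          μ (q k) *ᵥ (M⁻¹ *ᵥ (pt k - M *ᵥ Y (q k))) = 0 ∧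
          pt (k + 1) =
            ph k - (h / 2) • (Vq (q (k + 1)) + (μ (q (k + 1)))ᵀ *ᵥ lam (k + 1)) ∧
          μ (q (k + 1)) *ᵥ (M⁻¹ *ᵥ (pt (k + 1) - M *ᵥ Y (q (k + 1)))) = 0) := by
  obtain ⟨rfl, rfl⟩ : pt = nodeMomentum M h q ∧ ph = midpointMomentum M h q :=
    ⟨funext hpt, funext hph⟩
  exact affine_shake_iff_rattle_general hM Vq μ Y hh.ne' q lam
end

section
/- Let ω, y ∈ ℝ³ with associated skew-symmetric 3×3 matrices ω̂ and ŷ under the hat map. Then 1 − ω̂/2 and 1 + ω̂/2 are invertible and the right trivialized tangent of the Cayley map at ω̂ applied to ŷ satisfies (1 − ω̂/2)⁻¹ · ŷ · (1 + ω̂/2)⁻¹ = hat( (2 / (4 + ‖ω‖²)) · ( 2·y + ω × y ) ), i.e. under the hat identification d cay_ω is represented by the 3×3 matrix (2/(4 + ‖ω‖²))(2·I₃ + ω̂), where ‖ω‖² = ω₁² + ω₂² + ω₃² and × is the cross product on ℝ³. -/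
/-!
The matrix of `x ↦ ω × x` is `ω̂`, so the Lie bracket of hat matrices is `[ω̂, v̂] = hat (ω × v)`
and the expansion of the vector triple product gives `ω̂ v̂ ω̂ = -(ω · v) ω̂`. Hence
`(1 - t ω̂) v̂ (1 + t ω̂) = hat (v - t (ω × v) + t² (ω · v) ω)`. For `v = y + t (ω × y)` the triple
product expansion collapses the right side to `(1 + t² ‖ω‖²) ŷ`. The factors `1 ± t ω̂` are
invertible because a real skew-symmetric matrix does not have the eigenvalue `∓1`, so they can be
moved to the other side; the theorem is the case `t = 1/2`.
-/

open Matrix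

/-- The hat map sending `ω ∈ ℝ³` to the associated skew-symmetric 3×3 matrix. -/
def hat (ω : Fin 3 → ℝ) : Matrix (Fin 3) (Fin 3) ℝ :=
  !![0, -ω 2, ω 1; ω 2, 0, -ω 0; -ω 1, ω 0, 0]

section SkewSymmetric

variable {n K : Type*} [Fintype n]

lemma dotProduct_mulVec_self_eq_zero_of_transpose_eq_neg [CommRing K] [NoZeroDivisors K]
    [CharZero K] {A : Matrix n n K} (hA : Aᵀ = -A) (x : n → K) : x ⬝ᵥ A *ᵥ x = 0 := by
  refine self_eq_neg.mp ?_
  calc x ⬝ᵥ A *ᵥ x = Aᵀ *ᵥ x ⬝ᵥ x := by rw [dotProduct_mulVec, mulVec_transpose]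
    _ = -(x ⬝ᵥ A *ᵥ x) := by rw [hA, neg_mulVec, neg_dotProduct, dotProduct_comm]

lemma isUnit_one_add_of_transpose_eq_neg [DecidableEq n] [Field K] [LinearOrder K]
    [IsStrictOrderedRing K] {A : Matrix n n K} (hA : Aᵀ = -A) : IsUnit (1 + A) := by
  rw [← mulVec_injective_iff_isUnit, ← coe_mulVecLin, injective_iff_map_eq_zero]
  intro x hx
  rw [mulVecLin_apply, add_mulVec, one_mulVec] at hx
  rw [← dotProduct_self_eq_zero]
  calc x ⬝ᵥ x = x ⬝ᵥ (x + A *ᵥ x) := by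
        rw [dotProduct_add, dotProduct_mulVec_self_eq_zero_of_transpose_eq_neg hA, add_zero]
    _ = 0 := by rw [hx, dotProduct_zero]

end SkewSymmetric

lemma transpose_hat (ω : Fin 3 → ℝ) : (hat ω)ᵀ = -hat ω := by
  ext i j
  fin_cases i <;> fin_cases j <;> simp [hat]

lemma hat_eq_toMatrix'_crossProduct (ω : Fin 3 → ℝ) :
    hat ω = LinearMap.toMatrix' (crossProduct ω) := by
  ext i j
  fin_cases i <;> fin_cases j <;> simp [hat, LinearMap.toMatrix'_apply, cross_apply]

lemma hat_mulVec (ω x : Fin 3 → ℝ) : hat ω *ᵥ x = ω ⨯₃ x := by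
  rw [hat_eq_toMatrix'_crossProduct, LinearMap.toMatrix'_mulVec]

lemma hat_add (u v : Fin 3 → ℝ) : hat (u + v) = hat u + hat v := by
  simp only [hat_eq_toMatrix'_crossProduct, map_add]

lemma hat_sub (u v : Fin 3 → ℝ) : hat (u - v) = hat u - hat v := by
  simp only [hat_eq_toMatrix'_crossProduct, map_sub]

lemma hat_smul (c : ℝ) (u : Fin 3 → ℝ) : hat (c • u) = c • hat u := by
  simp only [hat_eq_toMatrix'_crossProduct, map_smul]

lemma isUnit_one_add_smul_hat (t : ℝ) (ω : Fin 3 → ℝ) : IsUnit (1 + t • hat ω) :=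
  isUnit_one_add_of_transpose_eq_neg (by rw [← hat_smul, transpose_hat])

lemma isUnit_one_sub_smul_hat (t : ℝ) (ω : Fin 3 → ℝ) : IsUnit (1 - t • hat ω) := by
  simpa only [neg_smul, ← sub_eq_add_neg] using isUnit_one_add_smul_hat (-t) ω

lemma hat_cross (u v : Fin 3 → ℝ) : hat (u ⨯₃ v) = hat u * hat v - hat v * hat u := by
  refine ext_iff_mulVec.mpr fun x ↦ ?_
  simp only [sub_mulVec, ← mulVec_mulVec, hat_mulVec, cross_cross]

lemma hat_mul_hat_mul_hat_self (ω v : Fin 3 → ℝ) :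
    hat ω * hat v * hat ω = -(ω ⬝ᵥ v) • hat ω := by
  refine ext_iff_mulVec.mpr fun x ↦ ?_
  calc (hat ω * hat v * hat ω) *ᵥ x = ω ⨯₃ (v ⨯₃ (ω ⨯₃ x)) := by
        simp only [← mulVec_mulVec, hat_mulVec]
    _ = (ω ⬝ᵥ ω ⨯₃ x) • v - (v ⬝ᵥ ω) • (ω ⨯₃ x) := cross_cross_eq_smul_sub_smul' ω v (ω ⨯₃ x)
    _ = -(ω ⬝ᵥ v) • (ω ⨯₃ x) := by
        rw [dot_self_cross, zero_smul, zero_sub, neg_smul, dotProduct_comm]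
    _ = (-(ω ⬝ᵥ v) • hat ω) *ᵥ x := by rw [smul_mulVec, hat_mulVec]

lemma one_sub_mul_hat_mul_one_add (t : ℝ) (ω v : Fin 3 → ℝ) :
    (1 - t • hat ω) * hat v * (1 + t • hat ω) =
      hat (v - t • (ω ⨯₃ v) + (t ^ 2 * (ω ⬝ᵥ v)) • ω) := by
  calc (1 - t • hat ω) * hat v * (1 + t • hat ω)
      = hat v - t • (hat ω * hat v - hat v * hat ω) - t ^ 2 • (hat ω * hat v * hat ω) := by
        simp only [sub_mul, mul_add, one_mul, mul_one, smul_mul_assoc, mul_smul_comm]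
        module
    _ = hat v - t • hat (ω ⨯₃ v) + (t ^ 2 * (ω ⬝ᵥ v)) • hat ω := by
        rw [← hat_cross, hat_mul_hat_mul_hat_self]
        module
    _ = hat (v - t • (ω ⨯₃ v) + (t ^ 2 * (ω ⬝ᵥ v)) • ω) := by
        rw [hat_add, hat_sub, hat_smul, hat_smul]

lemma one_sub_mul_hat_add_smul_cross_mul_one_add (t : ℝ) (ω y : Fin 3 → ℝ) :
    (1 - t • hat ω) * hat (y + t • (ω ⨯₃ y)) * (1 + t • hat ω) =
      (1 + t ^ 2 * (ω ⬝ᵥ ω)) • hat y := by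
  rw [one_sub_mul_hat_mul_one_add, ← hat_smul]
  congr 1
  have triple_product : ω ⨯₃ (ω ⨯₃ y) = (ω ⬝ᵥ y) • ω - (ω ⬝ᵥ ω) • y :=
    cross_cross_eq_smul_sub_smul' ω ω y
  have dot_eq : ω ⬝ᵥ (y + t • (ω ⨯₃ y)) = ω ⬝ᵥ y := by
    rw [dotProduct_add, dotProduct_smul, dot_self_cross, smul_zero, add_zero]
  rw [dot_eq, map_add, map_smul, triple_product]
  module

lemma inv_one_sub_mul_hat_mul_inv_one_add (t : ℝ) (ω y : Fin 3 → ℝ) :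
    (1 - t • hat ω)⁻¹ * hat y * (1 + t • hat ω)⁻¹ =
      hat ((1 + t ^ 2 * (ω ⬝ᵥ ω))⁻¹ • (y + t • (ω ⨯₃ y))) := by
  have hsub : IsUnit (1 - t • hat ω).det :=
    (isUnit_iff_isUnit_det _).mp (isUnit_one_sub_smul_hat t ω)
  have hadd : IsUnit (1 + t • hat ω).det :=
    (isUnit_iff_isUnit_det _).mp (isUnit_one_add_smul_hat t ω)
  have hpos : 0 < 1 + t ^ 2 * (ω ⬝ᵥ ω) := by
    have : 0 ≤ ω ⬝ᵥ ω := dotProduct_self_star_nonneg ω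
    positivity
  have hy : hat y = (1 - t • hat ω) *
      hat ((1 + t ^ 2 * (ω ⬝ᵥ ω))⁻¹ • (y + t • (ω ⨯₃ y))) * (1 + t • hat ω) := by
    rw [hat_smul, mul_smul_comm, smul_mul_assoc,
      one_sub_mul_hat_add_smul_cross_mul_one_add, inv_smul_smul₀ hpos.ne']
  rw [hy, mul_assoc (1 - t • hat ω), nonsing_inv_mul_cancel_left _ _ hsub,
    mul_nonsing_inv_cancel_right _ _ hadd]

/-- For `ω, y ∈ ℝ³`, the matrices `1 ± ω̂/2` are invertible and the
right trivialized tangent of the Cayley map at `ω̂` applied to `ŷ` satisfies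
`(1 − ω̂/2)⁻¹ ŷ (1 + ω̂/2)⁻¹ = hat((2/(4 + ‖ω‖²))(2y + ω × y))`; i.e. under the
hat identification `d cay_ω` is represented by the matrix
`(2/(4 + ‖ω‖²))(2 I₃ + ω̂)`. -/
theorem cayley_dtau_hat_formula (ω y : Fin 3 → ℝ) :
    IsUnit (1 - (2⁻¹ : ℝ) • hat ω) ∧ IsUnit (1 + (2⁻¹ : ℝ) • hat ω) ∧
      (1 - (2⁻¹ : ℝ) • hat ω)⁻¹ * hat y * (1 + (2⁻¹ : ℝ) • hat ω)⁻¹ =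
        hat ((2 / (4 + (ω 0 ^ 2 + ω 1 ^ 2 + ω 2 ^ 2))) •
          ((2 : ℝ) • y + crossProduct ω y)) ∧
      (2 / (4 + (ω 0 ^ 2 + ω 1 ^ 2 + ω 2 ^ 2))) •
          ((2 : ℝ) • y + crossProduct ω y) =
        ((2 / (4 + (ω 0 ^ 2 + ω 1 ^ 2 + ω 2 ^ 2))) •
          ((2 : ℝ) • (1 : Matrix (Fin 3) (Fin 3) ℝ) + hat ω)) *ᵥ y := by
  refine ⟨isUnit_one_sub_smul_hat _ ω, isUnit_one_add_smul_hat _ ω, ?_, ?_⟩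
  · have norm_sq : ω ⬝ᵥ ω = ω 0 ^ 2 + ω 1 ^ 2 + ω 2 ^ 2 := by
      rw [vec3_dotProduct]
      ring
    rw [inv_one_sub_mul_hat_mul_inv_one_add, ← norm_sq]
    have scale : (1 + (2⁻¹ : ℝ) ^ 2 * (ω ⬝ᵥ ω))⁻¹ = 2 / (4 + ω ⬝ᵥ ω) * 2 := by
      rw [show 1 + (2⁻¹ : ℝ) ^ 2 * (ω ⬝ᵥ ω) = (4 + ω ⬝ᵥ ω) / 4 by ring, inv_div]
      ring
    rw [scale, mul_smul, smul_add (2 : ℝ), smul_inv_smul₀ two_ne_zero]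
  · rw [smul_mulVec, add_mulVec, smul_mulVec, one_mulVec, hat_mulVec]
end
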